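/- arXiv:1402.5537 — 2 statements merged into one kernel-verified Lean document; each statement's English description precedes it below -/
import Mathlib

section
/- Let V = V₁ ⊕ V₂ be a unitary representation of G on H = H₁ ⊕ H₂ where V₁ and V₂ are irreducible and unitarily equivalent (V₂ = U V₁ U* for a unitary U : H₁ → H₂). If T is a G-invariant self-adjoint operator with respect to V, then T is bounded. -/
open scoped InnerProductSpace
open LinearPMap

/-- `G`-invariance of a (possibly unbounded) operator `T` with respect to a unitary
representation `V`. -/
def GInvariant {H : Type*} [NormedAddCommGroup H] [InnerProductSpace ℂ H]
    {G : Type*} [Group G] (V : G →* (H ≃ₗᵢ[ℂ] H)) (T : H →ₗ.[ℂ] H) : Prop :=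
  ∀ g : G, ∀ x : T.domain, ∃ hx : V g (x : H) ∈ T.domain,
    T ⟨V g (x : H), hx⟩ = V g (T x)

section Schur

variable {K : Type*} [NormedAddCommGroup K] [InnerProductSpace ℂ K]

/-- If a family of operators has no proper closed invariant subspace and `A * B = 0` with `A` in
its commutant, then `A = 0` or `B = 0`. -/
lemma eq_zero_or_eq_zero_of_commute_of_irreducible {S : Set (K →L[ℂ] K)}
    (hirr : ∀ M : Submodule ℂ K, _root_.IsClosed (M : Set K) → (∀ a ∈ S, ∀ x ∈ M, a x ∈ M) →
      M = ⊥ ∨ M = ⊤)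
    {A B : K →L[ℂ] K} (hA : ∀ a ∈ S, Commute A a) (hAB : A * B = 0) : A = 0 ∨ B = 0 := by
  rcases hirr A.ker A.isClosed_ker fun a ha x hx => by
      have h := DFunLike.congr_fun (hA a ha).eq x
      simp only [mul_apply_eq_comp] at h
      have hx' : A x = 0 := hx
      change A (a x) = 0
      rw [h, hx', _root_.map_zero] with h | h
  · right
    ext x
    have hx : B x ∈ A.ker := DFunLike.congr_fun hAB x
    rw [h] at hx
    simpa using hx
  · left
    ext x
    have hx : x ∈ A.ker := h ▸ Submodule.mem_top
    exact hx

variable [CompleteSpace K]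

/-- Schur's lemma for self-adjoint operators. -/
lemma IsSelfAdjoint.exists_eq_smul_one_of_commute_of_irreducible {S : Set (K →L[ℂ] K)}
    (hirr : ∀ M : Submodule ℂ K, _root_.IsClosed (M : Set K) → (∀ a ∈ S, ∀ x ∈ M, a x ∈ M) →
      M = ⊥ ∨ M = ⊤)
    {A : K →L[ℂ] K} (hsa : IsSelfAdjoint A) (hA : ∀ a ∈ S, Commute A a) :
    ∃ c : ℝ, A = (c : ℂ) • 1 := by
  have hsub : (spectrum ℝ A).Subsingleton := by
    suffices h : ∀ a ∈ spectrum ℝ A, ∀ b ∈ spectrum ℝ A, ¬ a < b from fun a ha b hb =>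
      le_antisymm (not_lt.1 (h b hb a ha)) (not_lt.1 (h a ha b hb))
    intro a ha b hb hab
    have hmul : cfc (fun t : ℝ => max ((a + b) / 2 - t) 0) A *
        cfc (fun t : ℝ => max (t - (a + b) / 2) 0) A = 0 := by
      rw [← cfc_mul _ _ A, ← cfc_zero ℝ A]
      congr 1
      funext t
      rcases le_total t ((a + b) / 2) with h | h
      · simp [max_eq_right (sub_nonpos.2 h)]
      · simp [max_eq_right (sub_nonpos.2 h)]
    have key : ∀ (f : ℝ → ℝ), Continuous f → cfc f A = 0 → ∀ t ∈ spectrum ℝ A, f t = 0 := by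
      intro f hf h t ht
      rw [← cfc_const_zero ℝ A] at h
      exact (cfc_eq_cfc_iff_eqOn hsa hf.continuousOn continuousOn_const).1 h ht
    rcases eq_zero_or_eq_zero_of_commute_of_irreducible hirr
      (fun s hs => ((hA s hs).cfc_real _)) hmul with h | h
    · have := key _ (by fun_prop) h a ha
      have := le_max_left ((a + b) / 2 - a) 0
      linarith
    · have := key _ (by fun_prop) h b hb
      have := le_max_left (b - (a + b) / 2) 0
      linarith
  obtain ⟨c, hc⟩ : ∃ c : ℝ, ∀ t ∈ spectrum ℝ A, t = c := by
    rcases hsub.eq_empty_or_singleton with h | ⟨c, h⟩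
    · exact ⟨0, by simp [h]⟩
    · exact ⟨c, by simp [h]⟩
  refine ⟨c, ?_⟩
  calc A = cfc (id : ℝ → ℝ) A := (cfc_id ℝ A).symm
    _ = cfc (fun _ : ℝ => c) A := cfc_congr fun t ht => hc t ht
    _ = algebraMap ℝ (K →L[ℂ] K) c := cfc_const c A
    _ = (c : ℂ) • 1 := by
      rw [Algebra.algebraMap_eq_smul_one]
      ext x
      simp

/-- Schur's lemma: an operator commuting with an irreducible star-closed family is scalar. -/
lemma exists_eq_smul_one_of_commute_of_irreducible {S : Set (K →L[ℂ] K)}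
    (hstar : ∀ a ∈ S, star a ∈ S)
    (hirr : ∀ M : Submodule ℂ K, _root_.IsClosed (M : Set K) → (∀ a ∈ S, ∀ x ∈ M, a x ∈ M) →
      M = ⊥ ∨ M = ⊤)
    {A : K →L[ℂ] K} (hA : ∀ a ∈ S, Commute A a) :
    ∃ c : ℂ, A = c • 1 := by
  have hA' : ∀ a ∈ S, Commute (star A) a := fun a ha => by
    simpa using (hA _ (hstar a ha)).star_star
  obtain ⟨c, hc⟩ := (realPart A).2.exists_eq_smul_one_of_commute_of_irreducible hirr
    fun a ha => by
      rw [realPart_apply_coe]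
      exact ((hA a ha).add_left (hA' a ha)).smul_left _
  obtain ⟨d, hd⟩ := (imaginaryPart A).2.exists_eq_smul_one_of_commute_of_irreducible hirr
    fun a ha => by
      rw [imaginaryPart_apply_coe]
      exact (((hA a ha).sub_left (hA' a ha)).smul_left _).smul_left _
  refine ⟨c + Complex.I * d, ?_⟩
  rw [← realPart_add_I_smul_imaginaryPart A, hc, hd, smul_smul, add_smul]

end Schur

section Resolvent

variable {H : Type*} [NormedAddCommGroup H] [InnerProductSpace ℂ H] [CompleteSpace H]

/-- A self-adjoint operator is symmetric. -/
lemma LinearPMap.inner_apply_left_of_adjoint_eq_self {T : H →ₗ.[ℂ] H}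
    (hdense : Dense (T.domain : Set H)) (hsa : T.adjoint = T) (x y : T.domain) :
    ⟪T x, (y : H)⟫_ℂ = ⟪(x : H), T y⟫_ℂ := by
  have h := adjoint_isFormalAdjoint hdense
  rw [hsa] at h
  exact h x y

/-- A self-adjoint operator `T` satisfies `‖x‖ ≤ ‖T x - i x‖`. -/
lemma LinearPMap.norm_le_norm_apply_sub_I_smul {T : H →ₗ.[ℂ] H}
    (hdense : Dense (T.domain : Set H)) (hsa : T.adjoint = T) (x : T.domain) :
    ‖(x : H)‖ ≤ ‖T x - Complex.I • (x : H)‖ := by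
  have him : (⟪(x : H), T x⟫_ℂ).im = 0 := by
    have h := inner_apply_left_of_adjoint_eq_self hdense hsa x x
    rw [← inner_conj_symm] at h
    exact Complex.conj_eq_iff_im.1 h
  have h : (⟪(x : H), T x - Complex.I • (x : H)⟫_ℂ).im = -(‖(x : H)‖ * ‖(x : H)‖) := by
    rw [inner_sub_right, inner_smul_right, Complex.sub_im, him, inner_self_eq_norm_sq_to_K]
    simp [sq]
  have h2 := (Complex.abs_im_le_norm _).trans
    (norm_inner_le_norm (𝕜 := ℂ) (x : H) (T x - Complex.I • (x : H)))
  rw [h, abs_neg, abs_of_nonneg (by positivity)] at h2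
  rcases (norm_nonneg (x : H)).eq_or_lt with h0 | h0
  · rw [← h0]
    positivity
  · exact le_of_mul_le_mul_left h2 h0

/-- The resolvent of a self-adjoint operator at `i`. -/
lemma LinearPMap.exists_resolvent_I {T : H →ₗ.[ℂ] H}
    (hdense : Dense (T.domain : Set H)) (hsa : T.adjoint = T) :
    ∃ R : H →L[ℂ] H, ∀ y : H, ∃ hy : R y ∈ T.domain, T ⟨R y, hy⟩ - Complex.I • R y = y := by
  have hclosed : _root_.IsClosed (T.graph : Set (H × H)) := IsSelfAdjoint.isClosed (A := T) hsa
  have : CompleteSpace T.graph := hclosed.completeSpace_coe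
  let f : T.graph →L[ℂ] H :=
    (ContinuousLinearMap.snd ℂ H H - Complex.I • ContinuousLinearMap.fst ℂ H H).comp
      T.graph.subtypeL
  have hf : ∀ x : T.domain, ∀ p : T.graph, (p : H × H) = ((x : H), T x) →
      f p = T x - Complex.I • (x : H) := fun x p hp => by simp [f, hp]
  have hanti : AntilipschitzWith 2 f := by
    refine ContinuousLinearMap.antilipschitz_of_bound f fun p => ?_
    obtain ⟨x, hx1, hx2⟩ := (mem_graph_iff T).1 p.2
    have hp : (p : H × H) = ((x : H), T x) := Prod.ext hx1.symm hx2.symm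
    have hle := norm_le_norm_apply_sub_I_smul hdense hsa x
    rw [hf x p hp]
    have hTx : ‖T x‖ ≤ ‖T x - Complex.I • (x : H)‖ + ‖(x : H)‖ := by
      have := norm_add_le (T x - Complex.I • (x : H)) (Complex.I • (x : H))
      rwa [sub_add_cancel, norm_smul, Complex.norm_I, one_mul] at this
    change ‖(p : H × H)‖ ≤ _
    rw [hp, Prod.norm_mk]
    refine max_le ?_ ?_ <;> push_cast <;> linarith [norm_nonneg (x : H)]
  have hker : f.ker = ⊥ := LinearMap.ker_eq_bot.2 hanti.injective
  have hrange : f.range = ⊤ := by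
    have hcl : _root_.IsClosed (f.range : Set H) := by
      rw [LinearMap.coe_range]
      exact hanti.isClosed_range f.uniformContinuous
    have : CompleteSpace f.range := hcl.completeSpace_coe
    rw [← Submodule.orthogonal_eq_bot_iff, Submodule.eq_bot_iff]
    intro y hy
    have hy' : ∀ x : T.domain, ⟪y, T x⟫_ℂ = Complex.I * ⟪y, (x : H)⟫_ℂ := fun x => by
      have h := (Submodule.mem_orthogonal' _ _).1 hy _
        (LinearMap.mem_range_self _ (⟨((x : H), T x), T.mem_graph x⟩ : T.graph))
      rw [ContinuousLinearMap.coe_coe, hf x _ rfl, inner_sub_right, inner_smul_right] at h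
      exact sub_eq_zero.1 h
    have hw : ∀ x : T.domain, ⟪-Complex.I • y, (x : H)⟫_ℂ = ⟪y, T x⟫_ℂ := fun x => by
      rw [hy', inner_smul_left]
      simp
    have hmem : y ∈ T.domain := by
      rw [← hsa]
      exact mem_adjoint_domain_of_exists y ⟨_, hw⟩
    have hTy : T ⟨y, hmem⟩ = -Complex.I • y := by
      refine hdense.eq_of_inner_left ℂ fun v hv => ?_
      rw [hw ⟨v, hv⟩]
      exact inner_apply_left_of_adjoint_eq_self hdense hsa ⟨y, hmem⟩ ⟨v, hv⟩
    have h := inner_apply_left_of_adjoint_eq_self hdense hsa ⟨y, hmem⟩ ⟨y, hmem⟩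
    rw [hTy, inner_smul_left, inner_smul_right] at h
    simp only [_root_.map_neg, Complex.conj_I, neg_neg, neg_mul] at h
    have h' : (2 * Complex.I) * ⟪y, y⟫_ℂ = 0 := by linear_combination h
    simpa using h'
  let e := ContinuousLinearEquiv.ofBijective f hker hrange
  refine ⟨(ContinuousLinearMap.fst ℂ H H).comp (T.graph.subtypeL.comp e.symm.toContinuousLinearMap),
    fun y => ?_⟩
  obtain ⟨x, hx1, hx2⟩ := (mem_graph_iff T).1 (e.symm y).2
  have hy := hf x (e.symm y) (Prod.ext hx1.symm hx2.symm)
  have hfe : f (e.symm y) = y := ContinuousLinearEquiv.ofBijective_apply_symm_apply f hker hrange y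
  have hxe : ((e.symm y : T.graph) : H × H).1 = x := hx1.symm
  simp only [ContinuousLinearMap.comp_apply, ContinuousLinearMap.coe_fst', Submodule.subtypeL_apply,
    ContinuousLinearEquiv.coe_coe, hxe]
  exact ⟨x.2, hy.symm.trans hfe⟩

/-- The resolvent of a `G`-invariant self-adjoint operator at `i` commutes with `G`. -/
lemma LinearPMap.resolvent_I_commute {G : Type*} [Group G] {V : G →* (H ≃ₗᵢ[ℂ] H)}
    {T : H →ₗ.[ℂ] H} (hdense : Dense (T.domain : Set H)) (hsa : T.adjoint = T)
    (hinv : GInvariant V T) {R : H →L[ℂ] H}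
    (hR : ∀ y : H, ∃ hy : R y ∈ T.domain, T ⟨R y, hy⟩ - Complex.I • R y = y) (g : G) (y : H) :
    R (V g y) = V g (R y) := by
  obtain ⟨h1, e1⟩ := hR (V g y)
  obtain ⟨h2, e2⟩ := hR y
  obtain ⟨h3, e3⟩ := hinv g ⟨R y, h2⟩
  have hle := norm_le_norm_apply_sub_I_smul hdense hsa (⟨R (V g y), h1⟩ - ⟨V g (R y), h3⟩)
  have hz : T (⟨R (V g y), h1⟩ - ⟨V g (R y), h3⟩) -
      Complex.I • ((⟨R (V g y), h1⟩ - ⟨V g (R y), h3⟩ : T.domain) : H) = 0 := by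
    have e4 := congrArg (V g) e2
    rw [_root_.map_sub, _root_.map_smul, ← e3] at e4
    rw [LinearPMap.map_sub, Submodule.coe_sub, smul_sub]
    have := e1.trans e4.symm
    rw [← sub_eq_zero] at this
    rw [← this]
    abel
  rw [hz, norm_zero] at hle
  simpa [sub_eq_zero] using norm_le_zero_iff.1 hle

end Resolvent

section Isotypic

lemma MonoidHom.inner_map_left {H G : Type*} [NormedAddCommGroup H] [InnerProductSpace ℂ H]
    [Group G] (V : G →* (H ≃ₗᵢ[ℂ] H)) (g : G) (x y : H) :
    ⟪V g x, y⟫_ℂ = ⟪x, V g⁻¹ y⟫_ℂ := by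
  have h : V g (V g⁻¹ y) = y := by
    change (V g * V g⁻¹) y = y
    rw [← _root_.map_mul, mul_inv_cancel, _root_.map_one]
    rfl
  rw [← (V g).inner_map_map x, h]

variable {H K : Type*} [NormedAddCommGroup H] [InnerProductSpace ℂ H] [CompleteSpace H]
  [NormedAddCommGroup K] [InnerProductSpace ℂ K] [CompleteSpace K]

open ContinuousLinearMap

/-- An injective operator acting on two copies of a space by a `2 × 2` scalar matrix is
surjective. -/
lemma surjective_of_injective_of_block_scalar {i₁ i₂ : K →L[ℂ] H}
    (hone : ∀ x, i₁ (adjoint i₁ x) + i₂ (adjoint i₂ x) = x) {R : H →L[ℂ] H} {a b c d : ℂ}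
    (h₁ : ∀ x, R (i₁ x) = a • i₁ x + c • i₂ x) (h₂ : ∀ x, R (i₂ x) = b • i₁ x + d • i₂ x)
    (hinj : Function.Injective R) : Function.Surjective R := by
  have hquad : ∀ x, R (R x - (a + d) • x) = -(a * d - b * c) • x := fun x => by
    rw [← hone x]
    simp only [_root_.map_sub, _root_.map_add, _root_.map_smul, h₁, h₂]
    module
  intro y
  by_cases hdet : a * d - b * c = 0
  · have hR : ∀ x, R x = (a + d) • x := fun x => by
      refine sub_eq_zero.1 (hinj ?_)
      rw [hquad, hdet, neg_zero, zero_smul, _root_.map_zero]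
    by_cases htr : a + d = 0
    · refine ⟨0, hinj ?_⟩
      simp [hR, htr]
    · exact ⟨(a + d)⁻¹ • y, by rw [hR, smul_inv_smul₀ htr]⟩
  · refine ⟨(-(a * d - b * c))⁻¹ • (R y - (a + d) • y), ?_⟩
    rw [_root_.map_smul, hquad, inv_smul_smul₀ (neg_ne_zero.2 hdet)]

/-- An injective operator commuting with the sum of two copies of an irreducible unitary
representation is surjective. -/
lemma surjective_of_injective_of_commute {G : Type*} [Group G] {V : G →* (H ≃ₗᵢ[ℂ] H)}
    {W : G → (K →L[ℂ] K)} (hW : ∀ g, adjoint (W g⁻¹) = W g)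
    (hirr : ∀ M : Submodule ℂ K, _root_.IsClosed (M : Set K) → (∀ g, ∀ x ∈ M, W g x ∈ M) →
      M = ⊥ ∨ M = ⊤)
    {i₁ i₂ : K →L[ℂ] H} (hone : ∀ x, i₁ (adjoint i₁ x) + i₂ (adjoint i₂ x) = x)
    (hi₁ : ∀ g x, i₁ (W g x) = V g (i₁ x)) (hi₂ : ∀ g x, i₂ (W g x) = V g (i₂ x))
    {R : H →L[ℂ] H} (hR : ∀ g x, R (V g x) = V g (R x)) (hinj : Function.Injective R) :
    Function.Surjective R := by
  have hadj : ∀ i : K →L[ℂ] H, (∀ g x, i (W g x) = V g (i x)) →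
      ∀ g x, adjoint i (V g x) = W g (adjoint i x) := fun i hi g x => by
    refine ext_inner_right ℂ fun y => ?_
    rw [adjoint_inner_left, ← hW g, adjoint_inner_left, adjoint_inner_left, hi,
      V.inner_map_left]
  have hscalar : ∀ i j : K →L[ℂ] H, (∀ g x, i (W g x) = V g (i x)) →
      (∀ g x, j (W g x) = V g (j x)) → ∃ c : ℂ, ∀ x, adjoint i (R (j x)) = c • x := by
    intro i j hi hj
    obtain ⟨c, hc⟩ := exists_eq_smul_one_of_commute_of_irreducible (S := Set.range W)
      (A := (adjoint i).comp (R.comp j))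
      (by
        rintro _ ⟨g, rfl⟩
        exact ⟨g⁻¹, by rw [← hW, inv_inv, star_eq_adjoint]⟩)
      (fun M hM h => hirr M hM fun g => h _ ⟨g, rfl⟩)
      (by
        rintro _ ⟨g, rfl⟩
        ext x
        simp [hj, hR, hadj i hi])
    exact ⟨c, fun x => by simpa using DFunLike.congr_fun hc x⟩
  obtain ⟨a, ha⟩ := hscalar i₁ i₁ hi₁ hi₁
  obtain ⟨b, hb⟩ := hscalar i₁ i₂ hi₁ hi₂
  obtain ⟨c, hc⟩ := hscalar i₂ i₁ hi₂ hi₁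
  obtain ⟨d, hd⟩ := hscalar i₂ i₂ hi₂ hi₂
  refine surjective_of_injective_of_block_scalar (a := a) (b := b) (c := c) (d := d) hone
    (fun x => ?_) (fun x => ?_) hinj
  · rw [← hone (R (i₁ x)), ha, hc, _root_.map_smul, _root_.map_smul]
  · rw [← hone (R (i₂ x)), hb, hd, _root_.map_smul, _root_.map_smul]

end Isotypic

/-- If `V = V₁ ⊕ V₂` with `V₁, V₂` irreducible and unitarily equivalent, then any
`G`-invariant self-adjoint operator `T` is bounded. -/
theorem equivalent_irreps_bounded {H : Type*} [NormedAddCommGroup H]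
    [InnerProductSpace ℂ H] [CompleteSpace H] {G : Type*} [Group G]
    (V : G →* (H ≃ₗᵢ[ℂ] H)) (H1 H2 : Submodule ℂ H)
    -- orthogonal decomposition `H = H₁ ⊕ H₂`
    (hcl1 : IsClosed (H1 : Set H)) (hcl2 : IsClosed (H2 : Set H))
    (horth : ∀ x ∈ H1, ∀ y ∈ H2, ⟪x, y⟫_ℂ = 0)
    (htotal : (H1 ⊔ H2).topologicalClosure = ⊤)
    -- `H₁`, `H₂` invariant, sub-representations irreducible
    (hsub1 : ∀ g : G, H1.map (V g).toLinearEquiv.toLinearMap = H1)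
    (hsub2 : ∀ g : G, H2.map (V g).toLinearEquiv.toLinearMap = H2)
    (hirr1 : ∀ K : Submodule ℂ H, K ≤ H1 → IsClosed (K : Set H) →
      (∀ g : G, K.map (V g).toLinearEquiv.toLinearMap ≤ K) → K = ⊥ ∨ K = H1)
    (hirr2 : ∀ K : Submodule ℂ H, K ≤ H2 → IsClosed (K : Set H) →
      (∀ g : G, K.map (V g).toLinearEquiv.toLinearMap ≤ K) → K = ⊥ ∨ K = H2)
    -- `V₂ = U V₁ U*` for a unitary `U : H₁ → H₂` intertwining the sub-representations
    (U : H1 ≃ₗᵢ[ℂ] H2)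
    (hU : ∀ (g : G) (x : H1) (hx : V g (x : H) ∈ H1),
      (U ⟨V g (x : H), hx⟩ : H) = V g (U x : H))
    -- `T` self-adjoint and `G`-invariant
    (T : H →ₗ.[ℂ] H) (hdense : Dense (T.domain : Set H)) (hsa : T.adjoint = T)
    (hinv : GInvariant V T) :
    T.domain = ⊤ ∧ ∃ C : ℝ, ∀ x : T.domain, ‖T x‖ ≤ C * ‖(x : H)‖ := by
  obtain ⟨R, hR⟩ := exists_resolvent_I hdense hsa
  have hinj : Function.Injective R := by
    refine (injective_iff_map_eq_zero R).2 fun y hy => ?_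
    obtain ⟨h, e⟩ := hR y
    have h0 : (⟨R y, h⟩ : T.domain) = 0 := Subtype.ext hy
    rw [← e, h0, LinearPMap.map_zero, hy, smul_zero, sub_zero]
  have : CompleteSpace H1 := hcl1.completeSpace_coe
  let i₁ : H1 →L[ℂ] H := H1.subtypeL
  let i₂ : H1 →L[ℂ] H := H2.subtypeL.comp U.toContinuousLinearEquiv.toContinuousLinearMap
  have hi₁ : ∀ x : H1, i₁ x = x := fun _ => rfl
  have hi₂ : ∀ x : H1, i₂ x = U x := fun _ => rfl
  have h₁₁ : ∀ x, ContinuousLinearMap.adjoint i₁ (i₁ x) = x := fun x =>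
    ext_inner_right ℂ fun y => by
      rw [ContinuousLinearMap.adjoint_inner_left, hi₁, hi₁, Submodule.coe_inner]
  have h₂₂ : ∀ x, ContinuousLinearMap.adjoint i₂ (i₂ x) = x := fun x =>
    ext_inner_right ℂ fun y => by
      rw [ContinuousLinearMap.adjoint_inner_left, hi₂, hi₂, ← Submodule.coe_inner,
        U.inner_map_map]
  have h₂₁ : ∀ x, ContinuousLinearMap.adjoint i₂ (i₁ x) = 0 := fun x =>
    ext_inner_right ℂ fun y => by
      rw [ContinuousLinearMap.adjoint_inner_left, inner_zero_left]
      exact horth _ x.2 _ (U y).2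
  have h₁₂ : ∀ x, ContinuousLinearMap.adjoint i₁ (i₂ x) = 0 := fun x =>
    ext_inner_left ℂ fun y => by
      rw [ContinuousLinearMap.adjoint_inner_right, inner_zero_right]
      exact horth _ y.2 _ (U x).2
  have hone : ∀ x, i₁ (ContinuousLinearMap.adjoint i₁ x) +
      i₂ (ContinuousLinearMap.adjoint i₂ x) = x := by
    let Q : H →L[ℂ] H := i₁.comp (ContinuousLinearMap.adjoint i₁) +
      i₂.comp (ContinuousLinearMap.adjoint i₂)
    have hle : H1 ⊔ H2 ≤ LinearMap.eqLocus Q.toLinearMap LinearMap.id := by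
      refine sup_le (fun x hx => ?_) (fun x hx => ?_)
      · change i₁ (ContinuousLinearMap.adjoint i₁ (i₁ ⟨x, hx⟩)) +
          i₂ (ContinuousLinearMap.adjoint i₂ (i₁ ⟨x, hx⟩)) = i₁ ⟨x, hx⟩
        rw [h₁₁, h₂₁, _root_.map_zero, add_zero]
      · have hx' : i₂ (U.symm ⟨x, hx⟩) = x := by rw [hi₂, U.apply_symm_apply]
        change i₁ (ContinuousLinearMap.adjoint i₁ x) + i₂ (ContinuousLinearMap.adjoint i₂ x) = x
        rw [← hx', h₁₂, h₂₂, _root_.map_zero, zero_add]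
    have hcl : _root_.IsClosed (LinearMap.eqLocus Q.toLinearMap LinearMap.id : Set H) :=
      isClosed_eq Q.continuous continuous_id
    have htop := Submodule.topologicalClosure_minimal _ hle hcl
    rw [htotal] at htop
    exact fun x => htop (Submodule.mem_top (x := x))
  have hmem : ∀ (g : G) (x : H1), V g (x : H) ∈ H1 := fun g x => by
    have h := Submodule.mem_map_of_mem (f := (V g).toLinearEquiv.toLinearMap) x.2
    rw [hsub1 g] at h
    exact h
  let W : G → (H1 →L[ℂ] H1) := fun g => (ContinuousLinearMap.adjoint i₁).comp
    ((V g).toContinuousLinearEquiv.toContinuousLinearMap.comp i₁)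
  have hWapply : ∀ g x, W g x = ⟨V g (x : H), hmem g x⟩ := fun g x =>
    h₁₁ ⟨V g (x : H), hmem g x⟩
  have hW : ∀ g, ContinuousLinearMap.adjoint (W g⁻¹) = W g := fun g => by
    ext1 x
    refine ext_inner_right ℂ fun y => ?_
    rw [ContinuousLinearMap.adjoint_inner_left, hWapply, hWapply, Submodule.coe_inner,
      Submodule.coe_inner, V.inner_map_left]
  have hirr : ∀ M : Submodule ℂ H1, _root_.IsClosed (M : Set H1) →
      (∀ g, ∀ x ∈ M, W g x ∈ M) → M = ⊥ ∨ M = ⊤ := by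
    intro M hM hMW
    have hinjH : Function.Injective H1.subtype := H1.subtype_injective
    refine (hirr1 (M.map H1.subtype) (H1.map_subtype_le M) ?_ ?_).imp (fun h => ?_) (fun h => ?_)
    · rw [Submodule.map_coe]
      exact hcl1.isClosedEmbedding_subtypeVal.isClosedMap _ hM
    · rintro g _ ⟨_, ⟨x, hx, rfl⟩, rfl⟩
      exact ⟨W g x, hMW g x hx, by rw [hWapply]; rfl⟩
    · exact Submodule.map_injective_of_injective hinjH (h.trans (Submodule.map_bot _).symm)
    · exact Submodule.map_injective_of_injective hinjH (h.trans H1.map_subtype_top.symm)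
  have hsurj := surjective_of_injective_of_commute hW hirr hone
    (fun g x => by rw [hWapply]; rfl) (fun g x => by rw [hWapply, hi₂, hU]; rfl)
    (resolvent_I_commute hdense hsa hinv hR) hinj
  have htop : T.domain = ⊤ := by
    refine Submodule.eq_top_iff'.2 fun x => ?_
    obtain ⟨y, rfl⟩ := hsurj x
    exact (hR y).1
  refine ⟨htop, ?_⟩
  let T' : H →ₗ[ℂ] H := T.toFun.comp (LinearMap.id.codRestrict T.domain fun x => by simp [htop])
  have hsymm : T'.IsSymmetric := fun x y =>
    inner_apply_left_of_adjoint_eq_self hdense hsa ⟨x, htop ▸ Submodule.mem_top⟩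
      ⟨y, htop ▸ Submodule.mem_top⟩
  exact ⟨‖(⟨T', hsymm.continuous⟩ : H →L[ℂ] H)‖, fun x =>
    (⟨T', hsymm.continuous⟩ : H →L[ℂ] H).le_opNorm x⟩
end

section
/- If T is an unbounded self-adjoint operator on a Hilbert space H which is G-invariant with respect to a unitary representation V : G → U(H), then V cannot be expressed as a direct sum of finitely many irreducible representations. -/
open scoped InnerProductSpace
open LinearPMap

/-- An operator family is topologically irreducible if its only closed invariant subspaces are
trivial. -/
def IsTopIrreducible {G E : Type*} [NormedAddCommGroup E] [InnerProductSpace ℂ E]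
    (U : G → E →L[ℂ] E) : Prop :=
  ∀ K : Submodule ℂ E, IsClosed (K : Set E) → (∀ g, ∀ x ∈ K, U g x ∈ K) → K = ⊥ ∨ K = ⊤

/-- The space of bounded operators intertwining two operator families. -/
def intertwiners {G E F : Type*} [NormedAddCommGroup E] [InnerProductSpace ℂ E]
    [NormedAddCommGroup F] [InnerProductSpace ℂ F]
    (U : G → E →L[ℂ] E) (W : G → F →L[ℂ] F) : Submodule ℂ (E →L[ℂ] F) where
  carrier := {S | ∀ g, S ∘L U g = W g ∘L S}
  add_mem' {a b} ha hb g := by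
    simp only [Set.mem_ofPred_eq] at ha hb
    rw [ContinuousLinearMap.add_comp, ContinuousLinearMap.comp_add, ha, hb]
  zero_mem' g := by simp
  smul_mem' c a ha g := by
    simp only [Set.mem_ofPred_eq] at ha
    rw [ContinuousLinearMap.smul_comp, ContinuousLinearMap.comp_smul, ha]

section Schur

variable {G E F : Type*} [NormedAddCommGroup E] [InnerProductSpace ℂ E]
  [NormedAddCommGroup F] [InnerProductSpace ℂ F]

theorem comp_mem_intertwiners {D : Type*} [NormedAddCommGroup D] [InnerProductSpace ℂ D]
    {Z : G → D →L[ℂ] D} {U : G → E →L[ℂ] E} {W : G → F →L[ℂ] F} {S : E →L[ℂ] F} {R : D →L[ℂ] E}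
    (hS : S ∈ intertwiners U W) (hR : R ∈ intertwiners Z U) : S ∘L R ∈ intertwiners Z W := by
  intro g
  rw [ContinuousLinearMap.comp_assoc, hR g, ← ContinuousLinearMap.comp_assoc, hS g,
    ContinuousLinearMap.comp_assoc]

theorem adjoint_mem_intertwiners [Group G] [CompleteSpace E] [CompleteSpace F]
    {U : G → E →L[ℂ] E} {W : G → F →L[ℂ] F}
    (hU : ∀ g, (U g).adjoint = U g⁻¹) (hW : ∀ g, (W g).adjoint = W g⁻¹)
    {S : E →L[ℂ] F} (hS : S ∈ intertwiners U W) : S.adjoint ∈ intertwiners W U := by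
  intro g
  have h := congrArg ContinuousLinearMap.adjoint (hS g⁻¹)
  simpa [ContinuousLinearMap.adjoint_comp, hU, hW] using h.symm

/-- Schur's lemma for self-adjoint operators. -/
theorem IsTopIrreducible.exists_eq_smul_one_of_isSelfAdjoint [CompleteSpace E]
    {U : G → E →L[ℂ] E} (hU : IsTopIrreducible U) {S : E →L[ℂ] E} (hsa : IsSelfAdjoint S)
    (hS : S ∈ intertwiners U U) : ∃ c : ℂ, S = c • 1 := by
  have hsub : (spectrum ℝ S).Subsingleton := by
    refine Set.not_nontrivial_iff.1 fun hnt => ?_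
    obtain ⟨s, hs, t, ht, hst⟩ := hnt.exists_lt
    set m : ℝ := (s + t) / 2 with hm
    set f : ℝ → ℝ := fun x => max (x - m) 0 with hf
    set g : ℝ → ℝ := fun x => max (m - x) 0 with hg
    have hfc : Continuous f := by fun_prop
    have hgc : Continuous g := by fun_prop
    have hfg : cfc f S * cfc g S = 0 := by
      rw [← cfc_mul f g S]
      have : (fun x => f x * g x) = fun _ => 0 := by
        ext x
        rcases le_total x m with h | h <;> simp [hf, hg, h]
      rw [this, cfc_const_zero]
    have hf0 : cfc f S ≠ 0 := by
      intro h
      have heq : Set.EqOn f (fun _ => 0) (spectrum ℝ S) :=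
        eqOn_of_cfc_eq_cfc (h.trans (cfc_const_zero ℝ S).symm)
      have ht0 : t - m ≤ 0 := (le_max_left _ _).trans (heq ht).le
      linarith
    have hg0 : cfc g S ≠ 0 := by
      intro h
      have heq : Set.EqOn g (fun _ => 0) (spectrum ℝ S) :=
        eqOn_of_cfc_eq_cfc (h.trans (cfc_const_zero ℝ S).symm)
      have hs0 : m - s ≤ 0 := (le_max_left _ _).trans (heq hs).le
      linarith
    have hker : ∀ a, ∀ x ∈ (cfc f S).ker, U a x ∈ (cfc f S).ker := by
      intro a x hx
      have hc : Commute (cfc f S) (U a) := Commute.cfc_real (hS a) f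
      have hcx : cfc f S (U a x) = U a (cfc f S x) :=
        congrArg (fun A : E →L[ℂ] E => A x) hc.eq
      have hx0 : cfc f S x = 0 := hx
      exact hcx.trans (by rw [hx0, _root_.map_zero])
    rcases hU (cfc f S).ker (cfc f S).isClosed_ker hker with h | h
    · apply hg0
      ext x
      have hx : cfc g S x ∈ (cfc f S).ker := by
        exact congrArg (fun A : E →L[ℂ] E => A x) hfg
      rw [h] at hx
      simpa using hx
    · apply hf0
      ext x
      have hx : x ∈ (cfc f S).ker := h ▸ Submodule.mem_top
      simpa using hx
  obtain ⟨c, hc⟩ : ∃ c : ℝ, ∀ x ∈ spectrum ℝ S, x = c := by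
    rcases hsub.eq_empty_or_singleton with h | ⟨c, h⟩
    · exact ⟨0, by simp [h]⟩
    · exact ⟨c, by simp [h]⟩
  refine ⟨c, ?_⟩
  calc S = cfc (id : ℝ → ℝ) S := (cfc_id ℝ S).symm
    _ = cfc (fun _ : ℝ => c) S := cfc_congr fun x hx => hc x hx
    _ = algebraMap ℝ _ c := cfc_const c S
    _ = (c : ℂ) • 1 := by rw [Algebra.algebraMap_eq_smul_one]; rfl

/-- Schur's lemma for an irreducible unitary family. -/
theorem IsTopIrreducible.exists_eq_smul_one [Group G] [CompleteSpace E]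
    {U : G → E →L[ℂ] E} (hU : IsTopIrreducible U) (hadj : ∀ g, (U g).adjoint = U g⁻¹)
    {S : E →L[ℂ] E} (hS : S ∈ intertwiners U U) : ∃ c : ℂ, S = c • 1 := by
  have hS' : star S ∈ intertwiners U U := adjoint_mem_intertwiners hadj hadj hS
  obtain ⟨a, ha⟩ := hU.exists_eq_smul_one_of_isSelfAdjoint (S := S + star S)
    (IsSelfAdjoint.add_star_self S) (add_mem hS hS')
  obtain ⟨b, hb⟩ := hU.exists_eq_smul_one_of_isSelfAdjoint (S := Complex.I • (S - star S))
    (by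
      rw [isSelfAdjoint_iff, star_smul, star_sub, star_star, Complex.star_def, Complex.conj_I,
        neg_smul, ← smul_neg, neg_sub])
    (Submodule.smul_mem _ _ (sub_mem hS hS'))
  refine ⟨(a - Complex.I * b) / 2, ?_⟩
  rw [div_eq_inv_mul, mul_smul, sub_smul, mul_smul, ← ha, ← hb, smul_smul, Complex.I_mul_I]
  module

/-- Schur's lemma: intertwiners between irreducible unitary families form a space of dimension
at most one. -/
theorem finiteDimensional_intertwiners [Group G] [CompleteSpace E] [CompleteSpace F]
    {U : G → E →L[ℂ] E} {W : G → F →L[ℂ] F} (hU : IsTopIrreducible U) (hW : IsTopIrreducible W)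
    (hUadj : ∀ g, (U g).adjoint = U g⁻¹) (hWadj : ∀ g, (W g).adjoint = W g⁻¹) :
    FiniteDimensional ℂ (intertwiners U W) := by
  by_cases h0 : ∀ S ∈ intertwiners U W, S = 0
  · have : intertwiners U W = ⊥ := (Submodule.eq_bot_iff _).2 h0
    rw [this]
    infer_instance
  push Not at h0
  obtain ⟨S, hS, hS0⟩ := h0
  have hSadj := adjoint_mem_intertwiners hUadj hWadj hS
  obtain ⟨d, hd⟩ := hW.exists_eq_smul_one hWadj (comp_mem_intertwiners hS hSadj)
  have hd0 : d ≠ 0 := by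
    rintro rfl
    apply hS0
    rw [zero_smul] at hd
    have h : S.adjoint = 0 := by
      ext x
      have hx := congrArg (fun A : F →L[ℂ] F => ⟪A x, x⟫_ℂ) hd
      simpa [← ContinuousLinearMap.adjoint_inner_right] using hx
    simpa using congrArg ContinuousLinearMap.adjoint h
  have hle : intertwiners U W ≤ Submodule.span ℂ {S} := by
    intro R hR
    obtain ⟨c, hc⟩ := hU.exists_eq_smul_one hUadj (comp_mem_intertwiners hSadj hR)
    have h : d • R = c • S := by
      calc d • R = (S ∘L S.adjoint) ∘L R := by rw [hd]; ext; simp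
        _ = S ∘L (S.adjoint ∘L R) := ContinuousLinearMap.comp_assoc ..
        _ = c • S := by rw [hc]; ext; simp
    refine Submodule.mem_span_singleton.2 ⟨d⁻¹ * c, ?_⟩
    rw [mul_smul, ← h, smul_smul, inv_mul_cancel₀ hd0, one_smul]
  exact Submodule.finiteDimensional_of_le hle

/-- If the commutant is finite dimensional, its injective elements are surjective. -/
theorem surjective_of_injective_of_mem_commutant {U : G → E →L[ℂ] E}
    [FiniteDimensional ℂ (intertwiners U U)] {B : E →L[ℂ] E} (hB : B ∈ intertwiners U U)
    (hinj : Function.Injective B) : Function.Surjective B := by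
  let Φ : intertwiners U U →ₗ[ℂ] intertwiners U U :=
    { toFun := fun A => ⟨B ∘L A, comp_mem_intertwiners hB A.2⟩
      map_add' := fun A A' => by ext; simp
      map_smul' := fun c A => by ext; simp }
  have hΦ : Function.Injective Φ := by
    intro A A' h
    ext x
    exact hinj (congrArg (fun C : E →L[ℂ] E => C x) (congrArg Subtype.val h))
  obtain ⟨X, hX⟩ := LinearMap.injective_iff_surjective.1 hΦ
    ⟨ContinuousLinearMap.id ℂ E, fun _ => rfl⟩
  exact fun y => ⟨(X : E →L[ℂ] E) y,
    congrArg (fun C : E →L[ℂ] E => C y) (congrArg Subtype.val hX)⟩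

end Schur

section Representation

variable {H : Type*} [NormedAddCommGroup H] [InnerProductSpace ℂ H] {G : Type*} [Group G]

theorem inner_map_left_eq_inner_map_inv (V : G →* (H ≃ₗᵢ[ℂ] H)) (g : G) (x y : H) :
    ⟪V g x, y⟫_ℂ = ⟪x, V g⁻¹ y⟫_ℂ := by
  rw [← (V g).inner_map_map x, map_inv]
  congr 1
  exact ((V g).apply_symm_apply y).symm

/-- The bounded operators underlying a unitary representation. -/
def repOperator (V : G →* (H ≃ₗᵢ[ℂ] H)) (g : G) : H →L[ℂ] H :=
  ((V g).toContinuousLinearEquiv : H →L[ℂ] H)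

@[simp]
theorem repOperator_apply (V : G →* (H ≃ₗᵢ[ℂ] H)) (g : G) (x : H) :
    repOperator V g x = V g x := rfl

/-- The restriction of a unitary representation to an invariant subspace. -/
def subrepOperator (V : G →* (H ≃ₗᵢ[ℂ] H)) (K : Submodule ℂ H)
    (hK : ∀ g, ∀ x ∈ K, V g x ∈ K) (g : G) : K →L[ℂ] K :=
  (repOperator V g ∘L K.subtypeL).codRestrict K fun x => hK g x x.2

@[simp]
theorem coe_subrepOperator_apply (V : G →* (H ≃ₗᵢ[ℂ] H)) (K : Submodule ℂ H)
    (hK : ∀ g, ∀ x ∈ K, V g x ∈ K) (g : G) (x : K) :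
    (subrepOperator V K hK g x : H) = V g x := rfl

theorem adjoint_subrepOperator (V : G →* (H ≃ₗᵢ[ℂ] H)) (K : Submodule ℂ H) [CompleteSpace K]
    (hK : ∀ g, ∀ x ∈ K, V g x ∈ K) (g : G) :
    (subrepOperator V K hK g).adjoint = subrepOperator V K hK g⁻¹ := by
  symm
  rw [ContinuousLinearMap.eq_adjoint_iff]
  intro x y
  rw [Submodule.coe_inner, Submodule.coe_inner, coe_subrepOperator_apply,
    coe_subrepOperator_apply, inner_map_left_eq_inner_map_inv, inv_inv]

theorem subtypeL_mem_intertwiners (V : G →* (H ≃ₗᵢ[ℂ] H)) (K : Submodule ℂ H)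
    (hK : ∀ g, ∀ x ∈ K, V g x ∈ K) :
    K.subtypeL ∈ intertwiners (subrepOperator V K hK) (repOperator V) :=
  fun _ => rfl

theorem orthogonalProjectionOnto_mem_intertwiners (V : G →* (H ≃ₗᵢ[ℂ] H)) (K : Submodule ℂ H)
    [K.HasOrthogonalProjection] (hK : ∀ g, ∀ x ∈ K, V g x ∈ K) :
    K.orthogonalProjectionOnto ∈ intertwiners (repOperator V) (subrepOperator V K hK) := by
  intro g
  ext x
  refine K.eq_starProjection_of_mem_of_inner_eq_zero (hK g _ (Subtype.prop _)) fun w hw => ?_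
  change ⟪V g x - V g (K.starProjection x), w⟫_ℂ = 0
  rw [← _root_.map_sub, inner_map_left_eq_inner_map_inv]
  exact K.starProjection_inner_eq_zero x _ (hK g⁻¹ w hw)

theorem isTopIrreducible_subrepOperator (V : G →* (H ≃ₗᵢ[ℂ] H)) (L : Submodule ℂ H)
    (hclosed : IsClosed (L : Set H)) (hL : ∀ g, ∀ x ∈ L, V g x ∈ L)
    (hirr : ∀ K : Submodule ℂ H, K ≤ L → IsClosed (K : Set H) →
      (∀ g : G, K.map (V g).toLinearEquiv.toLinearMap ≤ K) → K = ⊥ ∨ K = L) :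
    IsTopIrreducible (subrepOperator V L hL) := by
  intro K hKc hK
  have hinj : Function.Injective (Submodule.map L.subtype) :=
    Submodule.map_injective_of_injective L.injective_subtype
  rcases hirr (K.map L.subtype) (Submodule.map_subtype_le L K)
    (hclosed.isClosedEmbedding_subtypeVal.isClosedMap _ hKc) (by
      rintro g _ ⟨_, ⟨x, hx, rfl⟩, rfl⟩
      exact ⟨_, hK g x hx, rfl⟩) with h | h
  · exact Or.inl (hinj (by rw [h, Submodule.map_bot]))
  · exact Or.inr (hinj (by rw [h, Submodule.map_subtype_top]))

/-- The commutant of a representation generated by finitely many closed irreducible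
subrepresentations is finite dimensional. -/
theorem finiteDimensional_commutant [CompleteSpace H] (V : G →* (H ≃ₗᵢ[ℂ] H))
    {ι : Type*} [Finite ι] (L : ι → Submodule ℂ H) (hclosed : ∀ k, IsClosed (L k : Set H))
    (htop : (⨆ k, L k).topologicalClosure = ⊤) (hL : ∀ k g, ∀ x ∈ L k, V g x ∈ L k)
    (hirr : ∀ k, IsTopIrreducible (subrepOperator V (L k) (hL k))) :
    FiniteDimensional ℂ (intertwiners (repOperator V) (repOperator V)) := by
  have : ∀ k, CompleteSpace (L k) := fun k => (hclosed k).completeSpace_coe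
  have : ∀ k l, FiniteDimensional ℂ
      (intertwiners (subrepOperator V (L k) (hL k)) (subrepOperator V (L l) (hL l))) :=
    fun k l => finiteDimensional_intertwiners (hirr k) (hirr l)
      (adjoint_subrepOperator V _ _) (adjoint_subrepOperator V _ _)
  let Φ : intertwiners (repOperator V) (repOperator V) →ₗ[ℂ] ∀ k l,
      intertwiners (subrepOperator V (L k) (hL k)) (subrepOperator V (L l) (hL l)) :=
    { toFun := fun A k l => ⟨(L l).orthogonalProjectionOnto ∘L (A : H →L[ℂ] H) ∘L (L k).subtypeL,
        comp_mem_intertwiners (orthogonalProjectionOnto_mem_intertwiners V _ _)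
          (comp_mem_intertwiners A.2 (subtypeL_mem_intertwiners V _ _))⟩
      map_add' := fun A B => by ext; simp
      map_smul' := fun c A => by ext; simp }
  refine Module.Finite.of_injective Φ ((injective_iff_map_eq_zero Φ).2 fun A hA => ?_)
  have hzero : ∀ k, ∀ x ∈ L k, (A : H →L[ℂ] H) x = 0 := by
    intro k x hx
    have hmem : (A : H →L[ℂ] H) x ∈ (⨆ l, L l)ᗮ := by
      rw [← Submodule.iInf_orthogonal, Submodule.mem_iInf]
      intro l
      rw [← Submodule.orthogonalProjectionOnto_eq_zero_iff]
      have h := congrArg Subtype.val (congrFun (congrFun hA k) l)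
      exact congrArg (fun B : L k →L[ℂ] L l => B ⟨x, hx⟩) h
    rwa [← Submodule.orthogonal_closure, htop, Submodule.top_orthogonal_eq_bot,
      Submodule.mem_bot] at hmem
  have hker : (⨆ k, L k).topologicalClosure ≤ LinearMap.ker ((A : H →L[ℂ] H) : H →ₗ[ℂ] H) :=
    Submodule.topologicalClosure_minimal _ (iSup_le fun k x hx => hzero k x hx) (A : H →L[ℂ] H).isClosed_ker
  ext x
  exact hker (htop ▸ Submodule.mem_top)

/-- For a closed densely defined invariant operator `T`, there is an injective bounded operator in
the commutant with range in the domain of `T`; it is `(1 + T†T)⁻¹`, obtained by projecting onto the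
graph of `T`. -/
theorem exists_injective_mem_commutant_range_le_domain [CompleteSpace H]
    (V : G →* (H ≃ₗᵢ[ℂ] H)) {T : H →ₗ.[ℂ] H} (hdense : Dense (T.domain : Set H))
    (hT : T.IsClosed) (hinv : GInvariant V T) :
    ∃ B ∈ intertwiners (repOperator V) (repOperator V),
      Function.Injective B ∧ ∀ x, B x ∈ T.domain := by
  let e := WithLp.prodContinuousLinearEquiv 2 ℂ H H
  let Γ : Submodule ℂ (WithLp 2 (H × H)) := T.graph.comap (e : WithLp 2 (H × H) →ₗ[ℂ] H × H)
  have hΓ : IsClosed (Γ : Set (WithLp 2 (H × H))) := IsClosed.preimage e.continuous hT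
  have : CompleteSpace Γ := hΓ.completeSpace_coe
  have hΓV : ∀ g, ∀ z ∈ Γ, WithLp.toLp 2 (V g z.fst, V g z.snd) ∈ Γ := by
    intro g z hz
    obtain ⟨y, hy₁, hy₂⟩ := (LinearPMap.mem_graph_iff T).1 hz
    obtain ⟨hx, hTx⟩ := hinv g y
    refine (LinearPMap.mem_graph_iff T).2 ⟨⟨_, hx⟩, congrArg (V g) hy₁, ?_⟩
    rw [hTx]
    exact congrArg (V g) hy₂
  let B : H →L[ℂ] H := ContinuousLinearMap.fst ℂ H H ∘L (e : WithLp 2 (H × H) →L[ℂ] H × H) ∘L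
    Γ.starProjection ∘L (e.symm : H × H →L[ℂ] WithLp 2 (H × H)) ∘L ContinuousLinearMap.inl ℂ H H
  have hB : ∀ x, B x = (Γ.starProjection (WithLp.toLp 2 (x, 0))).fst := fun _ => rfl
  refine ⟨B, fun g => ?_, (injective_iff_map_eq_zero B).2 fun x hx => ?_, fun x => ?_⟩
  · ext x
    set z := Γ.starProjection (WithLp.toLp 2 (x, 0)) with hz
    have hproj : Γ.starProjection (WithLp.toLp 2 (V g x, 0)) =
        WithLp.toLp 2 (V g z.fst, V g z.snd) := by
      refine Γ.eq_starProjection_of_mem_of_inner_eq_zero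
        (hΓV g z (Submodule.coe_mem _)) fun w hw => ?_
      have h := Γ.starProjection_inner_eq_zero (WithLp.toLp 2 (x, 0)) _ (hΓV g⁻¹ w hw)
      rw [← hz] at h
      simpa [WithLp.prod_inner_apply, inner_sub_left, inner_map_left_eq_inner_map_inv] using h
    simp [hB, hproj, hz]
  · have hself : Γ.starProjection (WithLp.toLp 2 (x, 0)) = 0 := by
      rw [hB] at hx
      have h := Γ.starProjection_inner_eq_zero (WithLp.toLp 2 (x, 0)) _
        (Submodule.coe_mem (Γ.orthogonalProjectionOnto (WithLp.toLp 2 (x, 0))))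
      rw [inner_sub_left, sub_eq_zero] at h
      rw [← inner_self_eq_zero (𝕜 := ℂ)]
      refine h.symm.trans ?_
      rw [WithLp.prod_inner_apply]
      change ⟪x, (Γ.starProjection (WithLp.toLp 2 (x, 0))).fst⟫_ℂ + ⟪(0 : H), _⟫_ℂ = 0
      rw [hx, inner_zero_right, inner_zero_left, add_zero]
    refine hdense.eq_zero_of_inner_left ℂ fun y hy => ?_
    have h := Γ.starProjection_inner_eq_zero (WithLp.toLp 2 (x, 0)) (WithLp.toLp 2 (y, T ⟨y, hy⟩))
      (T.mem_graph ⟨y, hy⟩)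
    simpa [hself, WithLp.prod_inner_apply] using h
  · exact T.mem_domain_of_mem_graph
      (Submodule.coe_mem (Γ.orthogonalProjectionOnto (WithLp.toLp 2 (x, 0))))

end Representation

/-- Closed graph theorem for an everywhere defined closed operator. -/
theorem LinearPMap.IsClosed.exists_bound_of_domain_eq_top {H : Type*} [NormedAddCommGroup H]
    [InnerProductSpace ℂ H] [CompleteSpace H] {T : H →ₗ.[ℂ] H} (hT : T.IsClosed)
    (htop : ∀ x, x ∈ T.domain) : ∃ C : ℝ, ∀ x : T.domain, ‖T x‖ ≤ C * ‖(x : H)‖ := by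
  let f : H →ₗ[ℂ] H := T.toFun ∘ₗ LinearMap.id.codRestrict T.domain htop
  have hgraph : f.graph = T.graph := by
    ext ⟨x, y⟩
    rw [LinearMap.mem_graph_iff, LinearPMap.mem_graph_iff]
    constructor
    · intro h
      exact ⟨⟨x, htop x⟩, rfl, h.symm⟩
    · rintro ⟨z, rfl, rfl⟩
      rfl
  have hf : _root_.IsClosed (f.graph : Set (H × H)) := by
    rw [hgraph]
    exact hT
  exact ⟨‖ContinuousLinearMap.ofIsClosedGraph hf‖,
    fun x => (ContinuousLinearMap.ofIsClosedGraph hf).le_opNorm x⟩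

/-- If an unbounded self-adjoint operator `T` is `G`-invariant with respect to a unitary
representation `V`, then `V` cannot be a direct sum of finitely many irreducible
representations. -/
theorem no_finite_irreducible_decomposition {H : Type*} [NormedAddCommGroup H]
    [InnerProductSpace ℂ H] [CompleteSpace H] {G : Type*} [Group G]
    (V : G →* (H ≃ₗᵢ[ℂ] H))
    (T : H →ₗ.[ℂ] H) (hdense : Dense (T.domain : Set H)) (hsa : T.adjoint = T)
    -- `T` is unbounded
    (hunbdd : ¬ ∃ C : ℝ, ∀ x : T.domain, ‖T x‖ ≤ C * ‖(x : H)‖)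
    (hinv : GInvariant V T) :
    ¬ ∃ (N : ℕ) (Hn : Fin N → Submodule ℂ H),
        (∀ k, IsClosed ((Hn k : Submodule ℂ H) : Set H)) ∧
        (∀ k l, k ≠ l → ∀ x ∈ Hn k, ∀ y ∈ Hn l, ⟪x, y⟫_ℂ = 0) ∧
        (⨆ k, Hn k).topologicalClosure = ⊤ ∧
        (∀ (g : G) (k : Fin N), (Hn k).map (V g).toLinearEquiv.toLinearMap = Hn k) ∧
        (∀ k, ∀ K : Submodule ℂ H, K ≤ Hn k → IsClosed (K : Set H) →
          (∀ g : G, K.map (V g).toLinearEquiv.toLinearMap ≤ K) → K = ⊥ ∨ K = Hn k) := by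
  rintro ⟨N, L, hclosed, -, htop, hmap, hirr⟩
  have hL : ∀ k g, ∀ x ∈ L k, V g x ∈ L k := fun k g x hx =>
    (hmap g k).le (Submodule.mem_map_of_mem hx)
  have hT : T.IsClosed := IsSelfAdjoint.isClosed hsa
  have := finiteDimensional_commutant V L hclosed htop hL fun k =>
    isTopIrreducible_subrepOperator V (L k) (hclosed k) (hL k) (hirr k)
  obtain ⟨B, hB, hinj, hdom⟩ := exists_injective_mem_commutant_range_le_domain V hdense hT hinv
  refine hunbdd (hT.exists_bound_of_domain_eq_top fun y => ?_)
  obtain ⟨x, rfl⟩ := surjective_of_injective_of_mem_commutant hB hinj y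
  exact hdom x
end
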